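/- arXiv:2510.27360 — 2 statements merged into one kernel-verified Lean document; each statement's English description precedes it below -/
import Mathlib

section
/- Poincaré–Wirtinger inequality with sharp constant 1/2: for any function f of bounded variation on an open interval I ⊂ ℝ, the mean oscillation satisfies osc(f,I) ≤ (1/2)|Df|(I). -/
open MeasureTheory Set Filter
open scoped ENNReal

/-- Mean oscillation of `f` over the interval `(x, y)`. -/
noncomputable def oscI (f : ℝ → ℝ) (x y : ℝ) : ℝ :=
  (y - x)⁻¹ * ∫ t in x..y, |f t - (y - x)⁻¹ * ∫ s in x..y, f s|

/-- Total variation of the distributional derivative of `f` on `(x, y)`: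
the supremum of `∫ f φ'` over smooth `φ` supported in `(x, y)` with `‖φ‖_∞ ≤ 1`. -/
noncomputable def varD (f : ℝ → ℝ) (x y : ℝ) : ℝ≥0∞ :=
  ⨆ φ : {φ : ℝ → ℝ // ContDiff ℝ (⊤ : ℕ∞) φ ∧ HasCompactSupport φ ∧
      tsupport φ ⊆ Set.Ioo x y ∧ ∀ t, |φ t| ≤ 1},
    ENNReal.ofReal (∫ t in x..y, f t * deriv (φ : ℝ → ℝ) t)

/-!
By duality: with `s = sign (f - (f)_I)`, the oscillation integral `∫_I |f - (f)_I|` equals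
`∫_I f (s - (s)_I)`. The primitive of `s - (s)_I` vanishes at both ends of `I`, and its modulus at
distances `p`, `q` from the two ends is at most `2 p q / (p + q) ≤ |I| / 2`. Up to mollification it
is thus an admissible test function for `|Df|(I)`, scaled by `|I| / 2`.
-/

open Function
open scoped Topology ContDiff Convolution

section Approximation

variable {G E : Type*} [NormedAddCommGroup G] [NormedSpace ℝ G] [FiniteDimensional ℝ G]
  [NormedAddCommGroup E] [NormedSpace ℝ E] {U : Set G} {s : G → E} {K : ℝ}

lemma exists_contDiff_tsupport_subset_tendsto_one (hU : IsOpen U) :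
    ∃ η : ℕ → G → ℝ, (∀ n, ContDiff ℝ ∞ (η n)) ∧ (∀ n, tsupport (η n) ⊆ U) ∧
      (∀ n t, η n t ∈ Icc 0 1) ∧ ∀ t ∈ U, Tendsto (fun n ↦ η n t) atTop (𝓝 1) := by
  obtain ⟨ρ, hρU, hρ, hρ01⟩ := hU.exists_contDiff_support_eq (n := ⊤)
  refine ⟨fun n t ↦ Real.smoothTransition (n * ρ t - 1), fun n ↦ ?_, fun n ↦ ?_, fun n t ↦ ?_,
    fun t ht ↦ ?_⟩
  · exact Real.smoothTransition.contDiff.comp ((contDiff_const.mul hρ).sub contDiff_const)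
  · have hsub : tsupport (fun t ↦ Real.smoothTransition (n * ρ t - 1)) ⊆ {t | 1 ≤ n * ρ t} := by
      refine closure_minimal (fun t ht ↦ ?_)
        (isClosed_le continuous_const (continuous_const.mul hρ.continuous))
      by_contra hlt
      rw [mem_ofPred_eq, not_le] at hlt
      exact ht (Real.smoothTransition.zero_of_nonpos (by linarith))
    intro t ht
    rw [← hρU, mem_support]
    intro h0
    have := hsub ht
    norm_num [h0] at this
  · exact ⟨Real.smoothTransition.nonneg _, Real.smoothTransition.le_one _⟩
  · have hpos : 0 < ρ t :=
      lt_of_le_of_ne (hρ01 (mem_range_self t)).1 (Ne.symm (by rwa [← mem_support, hρU]))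
    refine tendsto_const_nhds.congr' ?_
    filter_upwards [(tendsto_natCast_atTop_atTop.atTop_mul_const hpos).eventually_ge_atTop 2]
      with n hn
    exact (Real.smoothTransition.one_of_one_le (by linarith)).symm

variable [MeasurableSpace G] [BorelSpace G] {μ : Measure G} [μ.IsAddHaarMeasure]

lemma exists_contDiff_integral_eq_one (hU : IsOpen U) (hne : U.Nonempty) :
    ∃ ψ : G → ℝ, ContDiff ℝ ∞ ψ ∧ HasCompactSupport ψ ∧ tsupport ψ ⊆ U ∧ ∫ t, ψ t ∂μ = 1 := by
  obtain ⟨p, hp⟩ := hne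
  obtain ⟨r, hr, hrU⟩ := Metric.nhds_basis_closedBall.mem_iff.1 (hU.mem_nhds hp)
  let ψ : ContDiffBump p := ⟨r / 2, r, half_pos hr, half_lt_self hr⟩
  exact ⟨ψ.normed μ, ψ.contDiff_normed, ψ.hasCompactSupport_normed,
    ψ.tsupport_normed_eq.trans_subset hrU, ψ.integral_normed⟩

variable [CompleteSpace E]

lemma exists_contDiff_tendsto_ae_of_norm_le (hs : AEStronglyMeasurable s μ)
    (hK : ∀ t, ‖s t‖ ≤ K) :
    ∃ σ : ℕ → G → E, (∀ n, ContDiff ℝ ∞ (σ n)) ∧ (∀ n t, ‖σ n t‖ ≤ K) ∧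
      ∀ᵐ t ∂μ, Tendsto (fun n ↦ σ n t) atTop (𝓝 (s t)) := by
  have hloc : LocallyIntegrable s μ :=
    (locallyIntegrable_const K).mono hs (.of_forall fun t ↦ (hK t).trans (le_abs_self K))
  let ρ (n : ℕ) : ContDiffBump (0 : G) :=
    ⟨1 / (n + 1), 2 * (1 / (n + 1)), by positivity, lt_two_mul_self (by positivity)⟩
  refine ⟨fun n ↦ (ρ n).normed μ ⋆[ContinuousLinearMap.lsmul ℝ ℝ, μ] s, fun n ↦ ?_,
    fun n t ↦ ?_, ?_⟩
  · exact (ρ n).hasCompactSupport_normed.contDiff_convolution_left _ (ρ n).contDiff_normed hloc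
  · rw [← dist_zero_right]
    exact dist_convolution_le ((norm_nonneg _).trans (hK 0)) (ρ n).support_normed_eq.subset
      (ρ n).nonneg_normed (ρ n).integral_normed hs fun r _ ↦ by simpa using hK r
  · refine ContDiffBump.ae_convolution_tendsto_right_of_locallyIntegrable (K := 2) ?_
      (.of_forall fun n ↦ le_rfl) hloc
    simpa [ρ] using (tendsto_one_div_add_atTop_nhds_zero_nat (𝕜 := ℝ)).const_mul 2

lemma exists_contDiff_tsupport_subset_tendsto_ae (hU : IsOpen U)
    (hs : AEStronglyMeasurable s (μ.restrict U)) (hK0 : 0 ≤ K) (hK : ∀ t ∈ U, ‖s t‖ ≤ K) :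
    ∃ σ : ℕ → G → E, (∀ n, ContDiff ℝ ∞ (σ n)) ∧ (∀ n, tsupport (σ n) ⊆ U) ∧
      (∀ n t, ‖σ n t‖ ≤ K) ∧ ∀ᵐ t ∂μ.restrict U, Tendsto (fun n ↦ σ n t) atTop (𝓝 (s t)) := by
  obtain ⟨η, hη, hηU, hη01, hη1⟩ := exists_contDiff_tsupport_subset_tendsto_one hU
  have hsK : ∀ t, ‖U.indicator s t‖ ≤ K := fun t ↦ by
    by_cases ht : t ∈ U
    · simpa [ht] using hK t ht
    · simpa [ht] using hK0
  obtain ⟨τ, hτ, hτK, hτs⟩ := exists_contDiff_tendsto_ae_of_norm_le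
    ((aestronglyMeasurable_indicator_iff hU.measurableSet).2 hs) hsK
  refine ⟨fun n t ↦ η n t • τ n t, fun n ↦ (hη n).smul (hτ n),
    fun n ↦ (tsupport_smul_subset_left _ _).trans (hηU n), fun n t ↦ ?_, ?_⟩
  · rw [norm_smul, Real.norm_of_nonneg (hη01 n t).1]
    exact (mul_le_of_le_one_left (norm_nonneg _) (hη01 n t).2).trans (hτK n t)
  · filter_upwards [ae_restrict_of_ae hτs, ae_restrict_mem hU.measurableSet] with t ht htU
    simpa [htU] using (hη1 t htU).smul ht

lemma exists_contDiff_integral_eq_zero_tendsto_ae (hU : IsOpen U) (hne : U.Nonempty)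
    (hμU : μ U ≠ ⊤) (hs : AEStronglyMeasurable s (μ.restrict U)) (hK : ∀ t ∈ U, ‖s t‖ ≤ K)
    (hs0 : ∫ t in U, s t ∂μ = 0) :
    ∃ (C : ℝ) (σ : ℕ → G → E), (∀ n, ContDiff ℝ ∞ (σ n)) ∧ (∀ n, tsupport (σ n) ⊆ U) ∧
      (∀ n, ∫ t in U, σ n t ∂μ = 0) ∧ (∀ n t, ‖σ n t‖ ≤ C) ∧
      ∀ᵐ t ∂μ.restrict U, Tendsto (fun n ↦ σ n t) atTop (𝓝 (s t)) := by
  have hK0 : 0 ≤ K := (norm_nonneg _).trans (hK _ hne.some_mem)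
  obtain ⟨τ, hτ, hτU, hτK, hτs⟩ := exists_contDiff_tsupport_subset_tendsto_ae hU hs hK0 hK
  -- Subtracting the multiple of `ψ` with the same integral as `τ n` restores mean zero.
  obtain ⟨ψ, hψ, hψc, hψU, hψ1⟩ := exists_contDiff_integral_eq_one (μ := μ) hU hne
  obtain ⟨B, hB⟩ := hψc.exists_bound_of_continuous hψ.continuous
  have hψU1 : ∫ t in U, ψ t ∂μ = 1 := by
    rw [setIntegral_eq_integral_of_forall_compl_eq_zero, hψ1]
    exact fun t ht ↦ image_eq_zero_of_notMem_tsupport fun h ↦ ht (hψU h)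
  have hτint (n : ℕ) : IntegrableOn (τ n) U μ :=
    IntegrableOn.of_bound hμU.lt_top (hτ n).continuous.aestronglyMeasurable K
      (.of_forall (hτK n))
  set c : ℕ → E := fun n ↦ ∫ t in U, τ n t ∂μ
  have hc0 : Tendsto c atTop (𝓝 0) := hs0 ▸ tendsto_integral_of_dominated_convergence (fun _ ↦ K)
    (fun n ↦ (hτ n).continuous.aestronglyMeasurable) (integrableOn_const hμU)
    (fun n ↦ .of_forall (hτK n)) hτs
  have hcK (n : ℕ) : ‖c n‖ ≤ K * μ.real U :=
    norm_setIntegral_le_of_norm_le_const hμU.lt_top fun t _ ↦ hτK n t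
  refine ⟨K + B * (K * μ.real U), fun n t ↦ τ n t - ψ t • c n, fun n ↦ ?_, fun n ↦ ?_,
    fun n ↦ ?_, fun n t ↦ ?_, ?_⟩
  · exact (hτ n).sub (hψ.smul contDiff_const)
  · exact (tsupport_sub _ _).trans
      (union_subset (hτU n) ((tsupport_smul_subset_left ψ _).trans hψU))
  · rw [integral_sub (hτint n) ((hψ.continuous.integrable_of_hasCompactSupport
      hψc).integrableOn.smul_const _), integral_smul_const, hψU1, one_smul, sub_self]
  · refine (norm_sub_le _ _).trans (add_le_add (hτK n t) ?_)
    rw [norm_smul]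
    exact mul_le_mul (hB t) (hcK n) (norm_nonneg _) ((norm_nonneg _).trans (hB t))
  · filter_upwards [hτs] with t ht
    simpa using ht.sub (hc0.const_smul (ψ t))

end Approximation

section Duality

variable {f g φ : ℝ → ℝ} {x y K M : ℝ}

lemma integral_mul_deriv_le_mul_varD (hbv : varD f x y ≠ ⊤) (hφ : ContDiff ℝ ∞ φ)
    (hsupp : tsupport φ ⊆ Ioo x y) (hM : ∀ t, |φ t| ≤ M) :
    ∫ t in x..y, f t * deriv φ t ≤ M * (varD f x y).toReal := by
  obtain rfl | hM0 := ((abs_nonneg _).trans (hM 0)).eq_or_lt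
  · have hφ0 : φ = 0 := funext fun t ↦ abs_nonpos_iff.1 (hM t)
    simp [hφ0]
  have hsub : tsupport (fun t ↦ M⁻¹ * φ t) ⊆ tsupport φ := tsupport_mul_subset_right
  have htest : ContDiff ℝ ∞ (fun t ↦ M⁻¹ * φ t) ∧ HasCompactSupport (fun t ↦ M⁻¹ * φ t) ∧
      tsupport (fun t ↦ M⁻¹ * φ t) ⊆ Ioo x y ∧ ∀ t, |M⁻¹ * φ t| ≤ 1 := by
    refine ⟨contDiff_const.mul hφ, ?_, hsub.trans hsupp, fun t ↦ ?_⟩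
    · exact isCompact_Icc.of_isClosed_subset (isClosed_tsupport _)
        (hsub.trans (hsupp.trans Ioo_subset_Icc_self))
    · rw [abs_mul, abs_inv, abs_of_pos hM0]
      exact inv_mul_le_one_of_le₀ (hM t) hM0.le
  have hle : ENNReal.ofReal (∫ t in x..y, f t * deriv (fun t ↦ M⁻¹ * φ t) t) ≤ varD f x y :=
    le_iSup_of_le ⟨_, htest⟩ le_rfl
  rw [ENNReal.ofReal_le_iff_le_toReal hbv] at hle
  simp only [deriv_const_mul_field', mul_left_comm _ M⁻¹, intervalIntegral.integral_const_mul]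
    at hle
  rwa [inv_mul_le_iff₀ hM0] at hle

lemma tsupport_primitive_subset_Ioo (hg : Continuous g) (hsupp : tsupport g ⊆ Ioo x y)
    (hg0 : ∫ t in x..y, g t = 0) : tsupport (fun t ↦ ∫ r in x..t, g r) ⊆ Ioo x y := by
  obtain hempty | hne := (tsupport g).eq_empty_or_nonempty
  · simp [tsupport_eq_empty_iff.1 hempty]
  have hcompact : IsCompact (tsupport g) :=
    isCompact_Icc.of_isClosed_subset (isClosed_tsupport g) (hsupp.trans Ioo_subset_Icc_self)
  obtain ⟨a, hag, ha⟩ := hcompact.exists_isLeast hne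
  obtain ⟨b, hbg, hb⟩ := hcompact.exists_isGreatest hne
  refine subset_trans (closure_minimal (fun t ht ↦ ?_) isClosed_Icc)
    (Icc_subset_Ioo (hsupp hag).1 (hsupp hbg).2)
  refine ⟨?_, ?_⟩ <;> by_contra! hlt <;> refine ht ?_
  · refine intervalIntegral.integral_zero_ae (.of_forall fun r hr ↦ ?_)
    exact image_eq_zero_of_notMem_tsupport fun hrg ↦
      (hr.2.trans_lt (max_lt (hsupp hag).1 hlt)).not_ge (ha hrg)
  · have hty : ∫ r in t..y, g r = 0 := by
      refine intervalIntegral.integral_zero_ae (.of_forall fun r hr ↦ ?_)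
      exact image_eq_zero_of_notMem_tsupport fun hrg ↦
        ((lt_min hlt (hsupp hbg).2).trans hr.1).not_ge (hb hrg)
    rw [← hg0, ← intervalIntegral.integral_add_adjacent_intervals
      (hg.intervalIntegrable x t) (hg.intervalIntegrable t y), hty, add_zero]

lemma integral_mul_le_mul_varD_of_contDiff (hxy : x ≤ y) (hbv : varD f x y ≠ ⊤)
    (hg : ContDiff ℝ ∞ g) (hsupp : tsupport g ⊆ Ioo x y) (hg0 : ∫ t in x..y, g t = 0)
    (hM : ∀ t ∈ Icc x y, |∫ r in x..t, g r| ≤ M) :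
    ∫ t in x..y, f t * g t ≤ M * (varD f x y).toReal := by
  have hderiv : ∀ t, HasDerivAt (fun t ↦ ∫ r in x..t, g r) (g t) t := fun t ↦
    hg.continuous.integral_hasStrictDerivAt x t |>.hasDerivAt
  have hderiv_eq : deriv (fun t ↦ ∫ r in x..t, g r) = g := funext fun t ↦ (hderiv t).deriv
  have hPsupp := tsupport_primitive_subset_Ioo hg.continuous hsupp hg0
  have hPM : ∀ t, |∫ r in x..t, g r| ≤ M := fun t ↦ by
    by_cases ht : t ∈ Icc x y
    · exact hM t ht
    · rw [image_eq_zero_of_notMem_tsupport (f := fun t ↦ ∫ r in x..t, g r)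
        fun h ↦ ht (Ioo_subset_Icc_self (hPsupp h)), abs_zero]
      exact (abs_nonneg _).trans (hM x (left_mem_Icc.2 hxy))
  have hPsmooth : ContDiff ℝ ∞ (fun t ↦ ∫ r in x..t, g r) :=
    contDiff_infty_iff_deriv.2 ⟨fun t ↦ (hderiv t).differentiableAt, hderiv_eq.symm ▸ hg⟩
  simpa only [hderiv_eq] using integral_mul_deriv_le_mul_varD hbv hPsmooth hPsupp hPM

lemma abs_primitive_le_add_integral_abs_sub {h : ℝ → ℝ} (hg : IntervalIntegrable g volume x y)
    (hh : IntervalIntegrable h volume x y) {t : ℝ} (ht : t ∈ Icc x y) :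
    |∫ r in x..t, h r| ≤ |∫ r in x..t, g r| + ∫ r in x..y, |h r - g r| := by
  have hxt : uIcc x t ⊆ uIcc x y := uIcc_subset_uIcc_left (Icc_subset_uIcc ht)
  have hgt := hg.mono_set hxt
  have hht := hh.mono_set hxt
  calc |∫ r in x..t, h r| = |(∫ r in x..t, g r) + ∫ r in x..t, (h r - g r)| := by
        rw [intervalIntegral.integral_sub hht hgt, add_sub_cancel]
    _ ≤ |∫ r in x..t, g r| + |∫ r in x..t, (h r - g r)| := abs_add_le _ _
    _ ≤ |∫ r in x..t, g r| + ∫ r in x..t, |h r - g r| := by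
        gcongr
        exact intervalIntegral.abs_integral_le_integral_abs ht.1
    _ ≤ |∫ r in x..t, g r| + ∫ r in x..y, |h r - g r| := by
        gcongr
        exact intervalIntegral.integral_mono_interval le_rfl ht.1 ht.2
          (.of_forall fun r ↦ abs_nonneg _) (hh.sub hg).abs

lemma tendsto_integral_mul_of_norm_le {α : Type*} [MeasurableSpace α] {μ : Measure α}
    {f g : α → ℝ} {σ : ℕ → α → ℝ} {C : ℝ} (hf : Integrable f μ)
    (hσ : ∀ n, AEStronglyMeasurable (σ n) μ) (hC : ∀ n t, ‖σ n t‖ ≤ C)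
    (hσg : ∀ᵐ t ∂μ, Tendsto (fun n ↦ σ n t) atTop (𝓝 (g t))) :
    Tendsto (fun n ↦ ∫ t, f t * σ n t ∂μ) atTop (𝓝 (∫ t, f t * g t ∂μ)) := by
  refine tendsto_integral_of_dominated_convergence (fun t ↦ |f t| * C)
    (fun n ↦ hf.1.mul (hσ n)) (hf.abs.mul_const C) (fun n ↦ .of_forall fun t ↦ ?_) ?_
  · rw [norm_mul]
    exact mul_le_mul_of_nonneg_left (hC n t) (norm_nonneg _)
  · filter_upwards [hσg] with t ht using ht.const_mul (f t)

lemma integral_mul_le_mul_varD (hxy : x < y) (hf : IntegrableOn f (Ioo x y))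
    (hbv : varD f x y ≠ ⊤) (hg : AEStronglyMeasurable g (volume.restrict (Ioo x y)))
    (hK : ∀ t ∈ Ioo x y, |g t| ≤ K) (hg0 : ∫ t in x..y, g t = 0)
    (hM : ∀ t ∈ Icc x y, |∫ r in x..t, g r| ≤ M) :
    ∫ t in x..y, f t * g t ≤ M * (varD f x y).toReal := by
  have htoIoo (h : ℝ → ℝ) : ∫ t in x..y, h t = ∫ t in Ioo x y, h t := by
    rw [intervalIntegral.integral_of_le hxy.le, integral_Ioc_eq_integral_Ioo]
  have hgint : IntegrableOn g (Ioo x y) := IntegrableOn.of_bound measure_Ioo_lt_top hg K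
    (ae_restrict_of_forall_mem measurableSet_Ioo hK)
  obtain ⟨C, σ, hσ, hσsupp, hσ0, hσC, hσg⟩ := exists_contDiff_integral_eq_zero_tendsto_ae
    isOpen_Ioo (nonempty_Ioo.2 hxy) measure_Ioo_lt_top.ne hg hK (htoIoo g ▸ hg0)
  have hσm (n : ℕ) : AEStronglyMeasurable (σ n) (volume.restrict (Ioo x y)) :=
    (hσ n).continuous.aestronglyMeasurable
  have hdist : Tendsto (fun n ↦ ∫ t in x..y, |σ n t - g t|) atTop (𝓝 0) := by
    simp only [htoIoo]
    rw [← integral_zero ℝ ℝ (μ := volume.restrict (Ioo x y))]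
    refine tendsto_integral_of_dominated_convergence (fun t ↦ C + |g t|)
      (fun n ↦ ((hσm n).sub hg).norm)
      ((integrableOn_const measure_Ioo_lt_top.ne).add hgint.abs) (fun n ↦ .of_forall fun t ↦ ?_) ?_
    · simpa using (norm_sub_le _ _).trans (add_le_add_left (hσC n t) _)
    · filter_upwards [hσg] with t ht
      simpa using (ht.sub_const (g t)).abs
  have hpair : Tendsto (fun n ↦ ∫ t in x..y, f t * σ n t) atTop (𝓝 (∫ t in x..y, f t * g t)) := by
    simpa only [htoIoo] using tendsto_integral_mul_of_norm_le hf hσm hσC hσg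
  refine le_of_tendsto_of_tendsto' hpair
    (by simpa using (hdist.const_add M).mul_const (varD f x y).toReal) fun n ↦ ?_
  refine integral_mul_le_mul_varD_of_contDiff hxy.le hbv (hσ n) (hσsupp n) (htoIoo _ ▸ hσ0 n)
    fun t ht ↦ (abs_primitive_le_add_integral_abs_sub
      ((intervalIntegrable_iff_integrableOn_Ioo_of_le hxy.le).2 hgint)
      ((hσ n).continuous.intervalIntegrable x y) ht).trans ?_
  gcongr
  exact hM t ht

end Duality

section Average

variable {f s : ℝ → ℝ} {x y t K : ℝ}

lemma intervalIntegral_sub_average (s : ℝ → ℝ) (x y : ℝ) :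
    ∫ r in x..y, (s r - ⨍ q in x..y, s q) = 0 := by
  have : IsFiniteMeasure (volume.restrict (uIoc x y)) := by rw [uIoc]; infer_instance
  rw [intervalIntegral.intervalIntegral_eq_integral_uIoc, integral_sub_average, smul_zero]

lemma integral_sub_average_mul_sub (hxy : x ≠ y) (hsxt : IntervalIntegrable s volume x t)
    (hsty : IntervalIntegrable s volume t y) :
    (∫ r in x..t, (s r - ⨍ q in x..y, s q)) * (y - x) =
      (y - t) * (∫ r in x..t, s r) - (t - x) * ∫ r in t..y, s r := by
  have hL : y - x ≠ 0 := sub_ne_zero.2 hxy.symm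
  rw [intervalIntegral.integral_sub hsxt intervalIntegrable_const,
    intervalIntegral.integral_const, interval_average_eq_div,
    ← intervalIntegral.integral_add_adjacent_intervals hsxt hsty, smul_eq_mul]
  field_simp
  ring

lemma abs_integral_sub_average_le (hxy : x < y) (hs : IntervalIntegrable s volume x y)
    (hK : ∀ r ∈ Ioc x y, |s r| ≤ K) (ht : t ∈ Icc x y) :
    |∫ r in x..t, (s r - ⨍ q in x..y, s q)| ≤ K * ((y - x) / 2) := by
  have hsxt : IntervalIntegrable s volume x t :=
    hs.mono_set (uIcc_subset_uIcc_left (Icc_subset_uIcc ht))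
  have hsty : IntervalIntegrable s volume t y :=
    hs.mono_set (uIcc_subset_uIcc_right (Icc_subset_uIcc ht))
  have hleft : |∫ r in x..t, s r| ≤ K * (t - x) := by
    simpa [abs_of_nonneg (sub_nonneg.2 ht.1)] using
      intervalIntegral.norm_integral_le_of_norm_le_const (f := s) (C := K) (a := x) (b := t)
        fun r hr ↦ hK r (by rw [uIoc_of_le ht.1] at hr; exact ⟨hr.1, hr.2.trans ht.2⟩)
  have hright : |∫ r in t..y, s r| ≤ K * (y - t) := by
    simpa [abs_of_nonneg (sub_nonneg.2 ht.2)] using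
      intervalIntegral.norm_integral_le_of_norm_le_const (f := s) (C := K) (a := t) (b := y)
        fun r hr ↦ hK r (by rw [uIoc_of_le ht.2] at hr; exact ⟨ht.1.trans_lt hr.1, hr.2⟩)
  have hK0 : 0 ≤ K := (abs_nonneg _).trans (hK y (right_mem_Ioc.2 hxy))
  have hL : 0 < y - x := sub_pos.2 hxy
  have hxt : 0 ≤ t - x := sub_nonneg.2 ht.1
  have hty : 0 ≤ y - t := sub_nonneg.2 ht.2
  refine le_of_mul_le_mul_right ?_ hL
  calc |∫ r in x..t, (s r - ⨍ q in x..y, s q)| * (y - x)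
      = |(y - t) * (∫ r in x..t, s r) - (t - x) * ∫ r in t..y, s r| := by
        rw [← integral_sub_average_mul_sub hxy.ne hsxt hsty, abs_mul, abs_of_pos hL]
    _ ≤ (y - t) * |∫ r in x..t, s r| + (t - x) * |∫ r in t..y, s r| := by
        refine (abs_sub _ _).trans_eq ?_
        rw [abs_mul, abs_mul, abs_of_nonneg hxt, abs_of_nonneg hty]
    _ ≤ (y - t) * (K * (t - x)) + (t - x) * (K * (y - t)) := by gcongr
    _ = K * (2 * ((t - x) * (y - t))) := by ring
    _ ≤ K * ((y - x) / 2 * (y - x)) :=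
        mul_le_mul_of_nonneg_left (by linarith [sq_nonneg ((t - x) - (y - t))]) hK0
    _ = K * ((y - x) / 2) * (y - x) := by ring

lemma integral_mul_sub_average_comm (hf : IntervalIntegrable f volume x y)
    (hs : IntervalIntegrable s volume x y)
    (hfs : IntervalIntegrable (fun t ↦ f t * s t) volume x y) :
    ∫ t in x..y, f t * (s t - ⨍ r in x..y, s r) = ∫ t in x..y, (f t - ⨍ r in x..y, f r) * s t := by
  simp only [mul_sub, sub_mul]
  rw [intervalIntegral.integral_sub hfs (hf.mul_const _),
    intervalIntegral.integral_sub hfs (hs.const_mul _), intervalIntegral.integral_mul_const,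
    intervalIntegral.integral_const_mul, interval_average_eq_div, interval_average_eq_div]
  ring

end Average

lemma monotone_coe_sign : Monotone fun z : ℝ ↦ (SignType.sign z : ℝ) := by
  have hcoe : Monotone ((↑) : SignType → ℝ) := fun p q hpq ↦ by
    revert hpq
    cases p <;> cases q <;> simp
  exact hcoe.comp SignType.sign.monotone

lemma integral_abs_sub_average_le_mul_varD {f : ℝ → ℝ} {x y : ℝ} (hxy : x < y)
    (hf : IntegrableOn f (Ioo x y)) (hbv : varD f x y ≠ ⊤) :
    ∫ t in x..y, |f t - ⨍ r in x..y, f r| ≤ (y - x) / 2 * (varD f x y).toReal := by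
  set s : ℝ → ℝ := fun t ↦ SignType.sign (f t - ⨍ r in x..y, f r)
  have hs1 : ∀ t, |s t| ≤ 1 := fun t ↦ by
    simp only [s]
    cases SignType.sign (f t - ⨍ r in x..y, f r) <;> simp
  have hsm : AEStronglyMeasurable s (volume.restrict (Ioo x y)) :=
    (monotone_coe_sign.measurable.comp_aemeasurable
      (hf.1.aemeasurable.sub_const _)).aestronglyMeasurable
  have hsI : IntegrableOn s (Ioo x y) :=
    IntegrableOn.of_bound measure_Ioo_lt_top hsm 1 (.of_forall hs1)
  have hfsI : IntegrableOn (fun t ↦ f t * s t) (Ioo x y) := hf.mul_bdd hsm (.of_forall hs1)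
  rw [← intervalIntegrable_iff_integrableOn_Ioo_of_le hxy.le] at hsI hfsI
  have hfI := (intervalIntegrable_iff_integrableOn_Ioo_of_le hxy.le).2 hf
  calc ∫ t in x..y, |f t - ⨍ r in x..y, f r|
      = ∫ t in x..y, (f t - ⨍ r in x..y, f r) * s t := by simp only [s, self_mul_sign]
    _ = ∫ t in x..y, f t * (s t - ⨍ r in x..y, s r) :=
        (integral_mul_sub_average_comm hfI hsI hfsI).symm
    _ ≤ (y - x) / 2 * (varD f x y).toReal :=
        integral_mul_le_mul_varD hxy hf hbv (hsm.sub aestronglyMeasurable_const)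
          (fun t _ ↦ (abs_sub _ _).trans (add_le_add_left (hs1 t) _))
          (intervalIntegral_sub_average s x y)
          (fun t ht ↦ by simpa using abs_integral_sub_average_le hxy hsI (fun r _ ↦ hs1 r) ht)

/-- Poincaré–Wirtinger inequality with sharp constant `1/2`: for a function of bounded
variation on a bounded open interval, `osc(f, I) ≤ (1/2)|Df|(I)`. -/
theorem poincare_wirtinger (x y : ℝ) (hxy : x < y) (f : ℝ → ℝ)
    (hint : IntegrableOn f (Set.Ioo x y))
    (hbv : varD f x y < ⊤) :
    ENNReal.ofReal (oscI f x y) ≤ (1 / 2) * varD f x y := by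
  have hosc : oscI f x y = (y - x)⁻¹ * ∫ t in x..y, |f t - ⨍ r in x..y, f r| := by
    simp only [oscI, interval_average_eq, smul_eq_mul]
  have hle : oscI f x y ≤ 1 / 2 * (varD f x y).toReal := by
    rw [hosc, inv_mul_le_iff₀ (sub_pos.2 hxy)]
    exact (integral_abs_sub_average_le_mul_varD hxy hint hbv.ne).trans_eq (by ring)
  calc ENNReal.ofReal (oscI f x y)
      ≤ ENNReal.ofReal (1 / 2 * (varD f x y).toReal) := ENNReal.ofReal_le_ofReal hle
    _ = 1 / 2 * varD f x y := by
        rw [ENNReal.ofReal_mul one_half_pos.le, ENNReal.ofReal_toReal hbv.ne,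
          ENNReal.ofReal_div_of_pos two_pos, ENNReal.ofReal_one, ENNReal.ofReal_ofNat]
end

section
/- The function f(x) = x^{5/2} does not satisfy the identity osc(f,I) = (1/4)|Df|(I) on any interval (α,β) with 0 < α < β; more precisely, the equality fails for some subinterval of (α,β). Equivalently, the real number s = 5/2 does not solve the equation 8s = (1+s)^{2 + 1/s}, while s = 1 does. -/
open MeasureTheory Set Filter
open scoped ENNReal

/-!
For `0 ≤ x < y` the variation of `t ↦ t ^ s` over `(x, y)` is `y ^ s - x ^ s`, and its mean
oscillation has a closed form that is analytic in `x ∈ (0, y)` and continuous at `x = 0`. An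
identity between the two that holds for `x` in some `(α, y)` therefore persists down to `x = 0`,
where homogeneity reduces it to `8 * s = (1 + s) ^ (2 + 1 / s)`.
-/

open scoped Topology Manifold

section Variation

variable {f f' φ : ℝ → ℝ} {x y u v : ℝ}

lemma integral_mul_deriv_eq_neg_of_tsupport_subset (hxy : x ≤ y) (hf : ContinuousOn f (Icc x y))
    (hf' : ∀ t ∈ Ioo x y, HasDerivAt f (f' t) t) (hint : IntervalIntegrable f' volume x y)
    (hφ : ContDiff ℝ 1 φ) (hsupp : tsupport φ ⊆ Ioo x y) :
    ∫ t in x..y, f t * deriv φ t = -∫ t in x..y, f' t * φ t := by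
  have hφx : φ x = 0 := image_eq_zero_of_notMem_tsupport fun h ↦ (hsupp h).1.false
  have hφy : φ y = 0 := image_eq_zero_of_notMem_tsupport fun h ↦ (hsupp h).2.false
  rw [intervalIntegral.integral_mul_deriv_eq_deriv_mul_of_hasDerivAt (u' := f')
    (by rwa [uIcc_of_le hxy]) hφ.continuous.continuousOn
    (by rwa [min_eq_left hxy, max_eq_right hxy])
    (fun t _ ↦ (hφ.differentiable one_ne_zero t).hasDerivAt) hint
    ((hφ.continuous_deriv le_rfl).intervalIntegrable x y), hφx, hφy]
  ring

lemma exists_contDiff_eqOn_one_Icc (hxu : x < u) (hvy : v < y) :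
    ∃ φ : ℝ → ℝ, ContDiff ℝ (⊤ : ℕ∞) φ ∧ tsupport φ ⊆ Ioo x y ∧ EqOn φ 1 (Icc u v) ∧
      ∀ t, φ t ∈ Icc 0 1 := by
  obtain ⟨x', hxx', hx'u⟩ := exists_between hxu
  obtain ⟨y', hvy', hy'y⟩ := exists_between hvy
  have hsub : Icc u v ⊆ interior (Icc x' y') := by
    rw [interior_Icc]
    exact Icc_subset_Ioo hx'u hvy'
  obtain ⟨φ, hone, hzero, hrange⟩ :=
    exists_contMDiffMap_one_nhds_of_subset_interior (n := ⊤) 𝓘(ℝ) isClosed_Icc hsub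
  have hsupp : Function.support φ ⊆ Icc x' y' := Function.support_subset_iff'.2 hzero
  exact ⟨φ, φ.contMDiff.contDiff,
    (closure_minimal hsupp isClosed_Icc).trans (Icc_subset_Ioo hxx' hy'y),
    fun t ht ↦ hone.self_of_nhdsSet t ht, hrange⟩

lemma varD_le_ofReal_sub (hxy : x ≤ y) (hf : ContinuousOn f (Icc x y))
    (hf' : ∀ t ∈ Ioo x y, HasDerivAt f (f' t) t) (hnonneg : ∀ t ∈ Ioo x y, 0 ≤ f' t)
    (hint : IntervalIntegrable f' volume x y) :
    varD f x y ≤ ENNReal.ofReal (f y - f x) := by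
  refine iSup_le fun ⟨φ, hφ, _, hsupp, hbound⟩ ↦ ENNReal.ofReal_le_ofReal ?_
  calc ∫ t in x..y, f t * deriv φ t
      = ∫ t in x..y, -(f' t * φ t) := by
        rw [integral_mul_deriv_eq_neg_of_tsupport_subset hxy hf hf' hint
          (hφ.of_le (by simp)) hsupp, intervalIntegral.integral_neg]
    _ ≤ ∫ t in x..y, f' t := by
        refine intervalIntegral.integral_mono_on_of_le_Ioo hxy
          (hint.mul_continuousOn hφ.continuous.continuousOn).neg hint fun t ht ↦ ?_
        nlinarith [hnonneg t ht, (abs_le.1 (hbound t)).1]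
    _ = f y - f x := intervalIntegral.integral_eq_sub_of_hasDerivAt_of_le hxy hf hf' hint

lemma ofReal_integral_mul_le_varD (hxy : x ≤ y) (hf : ContinuousOn f (Icc x y))
    (hf' : ∀ t ∈ Ioo x y, HasDerivAt f (f' t) t) (hint : IntervalIntegrable f' volume x y)
    (hφ : ContDiff ℝ (⊤ : ℕ∞) φ) (hsupp : tsupport φ ⊆ Ioo x y) (hbound : ∀ t, |φ t| ≤ 1) :
    ENNReal.ofReal (∫ t in x..y, f' t * φ t) ≤ varD f x y := by
  have hparts : ∫ t in x..y, f t * deriv (-φ) t = ∫ t in x..y, f' t * φ t := by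
    simp only [deriv.neg', mul_neg, intervalIntegral.integral_neg]
    rw [integral_mul_deriv_eq_neg_of_tsupport_subset hxy hf hf' hint (hφ.of_le (by simp)) hsupp,
      neg_neg]
  have hcompact : HasCompactSupport φ :=
    isCompact_Icc.of_isClosed_subset (isClosed_tsupport φ) (hsupp.trans Ioo_subset_Icc_self)
  rw [← hparts]
  exact le_iSup_of_le ⟨-φ, hφ.neg, hcompact.neg, by rwa [tsupport_neg],
    fun t ↦ (abs_neg (φ t)).trans_le (hbound t)⟩ le_rfl

lemma ofReal_sub_le_varD (hxu : x < u) (huv : u ≤ v) (hvy : v < y)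
    (hf : ContinuousOn f (Icc x y)) (hf' : ∀ t ∈ Ioo x y, HasDerivAt f (f' t) t)
    (hnonneg : ∀ t ∈ Ioo x y, 0 ≤ f' t) (hint : IntervalIntegrable f' volume x y) :
    ENNReal.ofReal (f v - f u) ≤ varD f x y := by
  obtain ⟨φ, hφ, hsupp, hone, hrange⟩ := exists_contDiff_eqOn_one_Icc hxu hvy
  have hxy : x ≤ y := by linarith
  have hIcc : Icc u v ⊆ Icc x y := Icc_subset_Icc hxu.le hvy.le
  have hint_uv : IntervalIntegrable f' volume u v :=
    hint.mono_set (by rwa [uIcc_of_le huv, uIcc_of_le hxy])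
  have hle : f v - f u ≤ ∫ t in x..y, f' t * φ t :=
    calc f v - f u
        = ∫ t in u..v, f' t :=
          (intervalIntegral.integral_eq_sub_of_hasDerivAt_of_le huv (hf.mono hIcc)
            (fun t ht ↦ hf' t (Ioo_subset_Ioo hxu.le hvy.le ht)) hint_uv).symm
      _ = ∫ t in u..v, f' t * φ t := by
          refine intervalIntegral.integral_congr fun t ht ↦ ?_
          rw [uIcc_of_le huv] at ht
          simp only [hone ht, Pi.one_apply, mul_one]
      _ ≤ ∫ t in x..y, f' t * φ t := by
          refine intervalIntegral.integral_mono_interval hxu.le huv hvy.le ?_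
            (hint.mul_continuousOn hφ.continuous.continuousOn)
          rw [← Measure.restrict_congr_set Ioo_ae_eq_Ioc]
          exact (ae_restrict_iff' measurableSet_Ioo).2
            (ae_of_all _ fun t ht ↦ mul_nonneg (hnonneg t ht) (hrange t).1)
  have hbound (t : ℝ) : |φ t| ≤ 1 := (abs_of_nonneg (hrange t).1).trans_le (hrange t).2
  exact (ENNReal.ofReal_le_ofReal hle).trans
    (ofReal_integral_mul_le_varD hxy hf hf' hint hφ hsupp hbound)

theorem varD_eq_ofReal_sub (hxy : x < y) (hf : ContinuousOn f (Icc x y))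
    (hf' : ∀ t ∈ Ioo x y, HasDerivAt f (f' t) t) (hnonneg : ∀ t ∈ Ioo x y, 0 ≤ f' t) :
    varD f x y = ENNReal.ofReal (f y - f x) := by
  have hint : IntervalIntegrable f' volume x y := by
    apply intervalIntegral.intervalIntegrable_deriv_of_nonneg (g := f) <;>
      simpa only [uIcc_of_le hxy.le, min_eq_left hxy.le, max_eq_right hxy.le]
  refine (varD_le_ofReal_sub hxy.le hf hf' hnonneg hint).antisymm ?_
  have hfx : Tendsto f (𝓝[>] x) (𝓝 (f x)) :=
    (hf x (left_mem_Icc.2 hxy.le)).mono_of_mem_nhdsWithin (Icc_mem_nhdsGT hxy)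
  have hfy : Tendsto f (𝓝[<] y) (𝓝 (f y)) :=
    (hf y (right_mem_Icc.2 hxy.le)).mono_of_mem_nhdsWithin (Icc_mem_nhdsLT hxy)
  obtain ⟨c, hxc, hcy⟩ := exists_between hxy
  refine le_of_tendsto (ENNReal.tendsto_ofReal
    ((hfy.comp tendsto_snd).sub (hfx.comp tendsto_fst))) ?_
  filter_upwards [prod_mem_prod (Ioo_mem_nhdsGT hxc) (Ioo_mem_nhdsLT hcy)] with ⟨u, v⟩ ⟨hu, hv⟩
  exact ofReal_sub_le_varD hu.1 (hu.2.trans hv.1).le hv.2 hf hf' hnonneg hint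

end Variation

section Oscillation

variable {f : ℝ → ℝ} {x y z : ℝ}

lemma oscI_nonneg (f : ℝ → ℝ) (hxy : x ≤ y) : 0 ≤ oscI f x y :=
  mul_nonneg (inv_nonneg.2 (sub_nonneg.2 hxy))
    (intervalIntegral.integral_nonneg hxy fun _ _ ↦ abs_nonneg _)

theorem oscI_eq_of_monotoneOn (hf : MonotoneOn f (Icc x y)) (hz : z ∈ Icc x y)
    (hmean : f z = (y - x)⁻¹ * ∫ t in x..y, f t) :
    oscI f x y = 2 * (y - x)⁻¹ * ∫ t in x..z, (f z - f t) := by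
  have hxy : x ≤ y := hz.1.trans hz.2
  have hint : IntervalIntegrable f volume x y :=
    MonotoneOn.intervalIntegrable (by rwa [uIcc_of_le hxy])
  have hg : IntervalIntegrable (fun t ↦ f t - f z) volume x y := hint.sub intervalIntegrable_const
  have hzmem : z ∈ uIcc x y := by rwa [uIcc_of_le hxy]
  have hgl : IntervalIntegrable (fun t ↦ f t - f z) volume x z :=
    hg.mono_set (uIcc_subset_uIcc_left hzmem)
  have hgr : IntervalIntegrable (fun t ↦ f t - f z) volume z y :=
    hg.mono_set (uIcc_subset_uIcc_right hzmem)
  have hleft : ∫ t in x..z, |f t - f z| = ∫ t in x..z, (f z - f t) := by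
    refine intervalIntegral.integral_congr fun t ht ↦ ?_
    rw [uIcc_of_le hz.1] at ht
    rw [← neg_sub (f t)]
    exact abs_of_nonpos (sub_nonpos.2 (hf ⟨ht.1, ht.2.trans hz.2⟩ hz ht.2))
  have hright : ∫ t in z..y, |f t - f z| = ∫ t in z..y, (f t - f z) := by
    refine intervalIntegral.integral_congr fun t ht ↦ ?_
    rw [uIcc_of_le hz.2] at ht
    exact abs_of_nonneg (sub_nonneg.2 (hf hz ⟨hz.1.trans ht.1, ht.2⟩ ht.1))
  have hbalance : ∫ t in z..y, (f t - f z) = ∫ t in x..z, (f z - f t) := by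
    have hzero : ∫ t in x..y, (f t - f z) = 0 := by
      rw [intervalIntegral.integral_sub hint intervalIntegrable_const,
        intervalIntegral.integral_const, smul_eq_mul, hmean]
      rcases hxy.eq_or_lt with rfl | hlt
      · simp
      · rw [mul_inv_cancel_left₀ (sub_pos.2 hlt).ne', sub_self]
    rw [← intervalIntegral.integral_add_adjacent_intervals hgl hgr] at hzero
    rw [eq_neg_of_add_eq_zero_right hzero, ← intervalIntegral.integral_neg]
    simp only [neg_sub]
  rw [oscI, ← hmean, ← intervalIntegral.integral_add_adjacent_intervals hgl.abs hgr.abs,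
    hleft, hright, hbalance]
  ring

end Oscillation

section Power

variable {s x y : ℝ}

theorem varD_rpow (hs : 0 < s) (hx : 0 ≤ x) (hxy : x < y) :
    varD (fun t ↦ t ^ s) x y = ENNReal.ofReal (y ^ s - x ^ s) := by
  refine varD_eq_ofReal_sub (f' := fun t ↦ s * t ^ (s - 1)) hxy
    (Real.continuous_rpow_const hs.le).continuousOn (fun t ht ↦ ?_) fun t ht ↦ ?_
  · exact Real.hasDerivAt_rpow_const (Or.inl (hx.trans_lt ht.1).ne')
  · have := hx.trans_lt ht.1
    positivity

/-- The mean of `t ↦ t ^ s` over `(x, y)`, with the integral evaluated so that analyticity in `x`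
can be read off. -/
noncomputable def rpowMean (s x y : ℝ) : ℝ :=
  (y ^ (s + 1) - x ^ (s + 1)) / ((s + 1) * (y - x))

/-- The point at which `t ↦ t ^ s` takes its mean value over `(x, y)`, for `s ≠ 0`. -/
noncomputable def rpowMeanPoint (s x y : ℝ) : ℝ :=
  rpowMean s x y ^ (1 / s)

/-- The mean oscillation of `t ↦ t ^ s` over `(x, y)`, in the closed form obtained by evaluating
`2 * (y - x)⁻¹ * ∫ t in x..z, (z ^ s - t ^ s)` at the mean point `z`. -/
noncomputable def rpowOsc (s x y : ℝ) : ℝ :=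
  2 * (y - x)⁻¹ * (rpowMeanPoint s x y ^ s * (rpowMeanPoint s x y - x) -
    (rpowMeanPoint s x y ^ (s + 1) - x ^ (s + 1)) / (s + 1))

lemma inv_mul_integral_rpow (hs : -1 < s) (hxy : x ≠ y) :
    (y - x)⁻¹ * ∫ t in x..y, t ^ s = rpowMean s x y := by
  have := sub_ne_zero.2 hxy.symm
  rw [rpowMean, integral_rpow (Or.inl hs)]
  field_simp

lemma rpowMeanPoint_eq_of_rpow_eq {z : ℝ} (hs : s ≠ 0) (hz : 0 ≤ z)
    (hmean : z ^ s = rpowMean s x y) : rpowMeanPoint s x y = z := by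
  rw [rpowMeanPoint, ← hmean, one_div, Real.rpow_rpow_inv hz hs]

theorem oscI_rpow (hs : 0 < s) (hx : 0 ≤ x) (hxy : x < y) :
    oscI (fun t ↦ t ^ s) x y = rpowOsc s x y := by
  have hcont : Continuous fun t : ℝ ↦ t ^ s := Real.continuous_rpow_const hs.le
  have hmono : MonotoneOn (fun t : ℝ ↦ t ^ s) (Icc x y) := fun a ha b _ hab ↦
    Real.rpow_le_rpow (hx.trans ha.1) hab hs.le
  obtain ⟨z, hz, hmean⟩ := exists_eq_interval_average hxy.ne hcont.continuousOn
  rw [uIoo_of_lt hxy] at hz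
  rw [interval_average_eq, smul_eq_mul] at hmean
  rw [oscI_eq_of_monotoneOn hmono (Ioo_subset_Icc_self hz) hmean, rpowOsc,
    rpowMeanPoint_eq_of_rpow_eq hs.ne' (hx.trans hz.1.le)
      (hmean.trans (inv_mul_integral_rpow (by linarith) hxy.ne)),
    intervalIntegral.integral_sub intervalIntegrable_const (hcont.intervalIntegrable x z),
    intervalIntegral.integral_const, integral_rpow (Or.inl (by linarith)), smul_eq_mul,
    mul_comm (z - x)]

theorem varD_rpow_eq_four_mul_oscI_iff (hs : 0 < s) (hx : 0 ≤ x) (hxy : x < y) :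
    varD (fun t ↦ t ^ s) x y = 4 * ENNReal.ofReal (oscI (fun t ↦ t ^ s) x y) ↔
      y ^ s - x ^ s = 4 * rpowOsc s x y := by
  have hsub : 0 ≤ y ^ s - x ^ s := sub_nonneg.2 (Real.rpow_le_rpow hx hxy.le hs.le)
  have hosc : 0 ≤ 4 * rpowOsc s x y :=
    mul_nonneg zero_le_four (oscI_rpow hs hx hxy ▸ oscI_nonneg _ hxy.le)
  rw [varD_rpow hs hx hxy, oscI_rpow hs hx hxy, ← ENNReal.ofReal_ofNat 4,
    ← ENNReal.ofReal_mul zero_le_four, ENNReal.ofReal_eq_ofReal_iff hsub hosc]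

lemma rpowMean_pos (hs : -1 < s) (hx : 0 ≤ x) (hxy : x < y) : 0 < rpowMean s x y :=
  div_pos (sub_pos.2 (Real.rpow_lt_rpow hx hxy (by linarith)))
    (mul_pos (by linarith) (sub_pos.2 hxy))

lemma rpowMeanPoint_pos (hs : -1 < s) (hx : 0 ≤ x) (hxy : x < y) : 0 < rpowMeanPoint s x y :=
  Real.rpow_pos_of_pos (rpowMean_pos hs hx hxy) _

lemma analyticAt_rpow_const {g : ℝ → ℝ} (hg : AnalyticAt ℝ g x) (hgx : g x ≠ 0) (s : ℝ) :
    AnalyticAt ℝ (fun t ↦ g t ^ s) x :=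
  (hg.contDiffAt.rpow_const_of_ne hgx).analyticAt

theorem analyticOnNhd_rpowOsc (hs : -1 < s) (y : ℝ) :
    AnalyticOnNhd ℝ (fun x ↦ rpowOsc s x y) (Ioo 0 y) := by
  intro x ⟨hx, hxy⟩
  have hpow : AnalyticAt ℝ (fun x : ℝ ↦ x ^ (s + 1)) x :=
    analyticAt_rpow_const analyticAt_id hx.ne' _
  have hlen : AnalyticAt ℝ (fun x ↦ y - x) x := analyticAt_const.sub analyticAt_id
  have hlen_ne : y - x ≠ 0 := (sub_pos.2 hxy).ne'
  have hmean : AnalyticAt ℝ (fun x ↦ rpowMean s x y) x :=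
    (analyticAt_const.sub hpow).div (analyticAt_const.mul hlen) (mul_ne_zero (by linarith) hlen_ne)
  have hpoint : AnalyticAt ℝ (fun x ↦ rpowMeanPoint s x y) x :=
    analyticAt_rpow_const hmean (rpowMean_pos hs hx.le hxy).ne' (1 / s)
  have hpoint_pow (r : ℝ) : AnalyticAt ℝ (fun x ↦ rpowMeanPoint s x y ^ r) x :=
    analyticAt_rpow_const hpoint (rpowMeanPoint_pos hs hx.le hxy).ne' r
  exact (analyticAt_const.mul (hlen.inv hlen_ne)).mul
    (((hpoint_pow s).mul (hpoint.sub analyticAt_id)).sub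
      (((hpoint_pow (s + 1)).sub hpow).div analyticAt_const (by linarith)))

theorem continuousAt_rpowOsc_zero (hs : 0 < s) (hy : 0 < y) :
    ContinuousAt (fun x ↦ rpowOsc s x y) 0 := by
  have hpow : ContinuousAt (fun x : ℝ ↦ x ^ (s + 1)) 0 :=
    (Real.continuous_rpow_const (by linarith)).continuousAt
  have hpoint : ContinuousAt (fun x ↦ rpowMeanPoint s x y) 0 := by
    refine ((continuousAt_const.sub hpow).div (by fun_prop) ?_).rpow_const
      (Or.inr (by positivity))
    rw [sub_zero]
    positivity
  have hpoint_pow {r : ℝ} (hr : 0 ≤ r) : ContinuousAt (fun x ↦ rpowMeanPoint s x y ^ r) 0 :=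
    hpoint.rpow_const (Or.inr hr)
  refine (continuousAt_const.mul ((by fun_prop : ContinuousAt (fun x ↦ y - x) 0).inv₀ ?_)).mul
    (((hpoint_pow hs.le).mul (hpoint.sub continuousAt_id)).sub
      (((hpoint_pow (by linarith)).sub hpow).div_const _))
  rw [sub_zero]
  exact hy.ne'

theorem rpowOsc_zero (hs : 0 < s) (hy : 0 < y) :
    rpowOsc s 0 y = 2 * s / (1 + s) ^ (2 + 1 / s) * y ^ s := by
  have hpoint : rpowMeanPoint s 0 y = y / (1 + s) ^ (1 / s) := by
    have hmean : rpowMean s 0 y = y ^ s / (1 + s) := by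
      rw [rpowMean, Real.zero_rpow (by linarith), Real.rpow_add_one hy.ne', sub_zero, sub_zero,
        add_comm s, mul_div_mul_right _ _ hy.ne']
    rw [rpowMeanPoint, hmean, Real.div_rpow (by positivity) (by linarith), one_div,
      Real.rpow_rpow_inv hy.le hs.ne']
  have hpoint_rpow : (y / (1 + s) ^ (1 / s)) ^ s = y ^ s / (1 + s) := by
    rw [Real.div_rpow hy.le (by positivity), one_div, Real.rpow_inv_rpow (by linarith) hs.ne']
  have hexp : (1 + s) ^ (2 + 1 / s) = (1 + s) ^ 2 * (1 + s) ^ (1 / s) := by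
    rw [Real.rpow_add (by linarith), Real.rpow_two]
  rw [rpowOsc, hpoint, Real.rpow_add_one (by positivity), hpoint_rpow,
    Real.zero_rpow (by linarith), hexp, sub_zero, sub_zero, sub_zero]
  field_simp
  ring

theorem sub_rpow_eq_four_mul_rpowOsc_of_forall_Ioo {α : ℝ} (hs : -1 < s) (hα : 0 ≤ α)
    (hαy : α < y) (h : ∀ x ∈ Ioo α y, y ^ s - x ^ s = 4 * rpowOsc s x y) :
    ∀ x ∈ Ioo 0 y, y ^ s - x ^ s = 4 * rpowOsc s x y := by
  obtain ⟨x₀, hαx₀, hx₀y⟩ := exists_between hαy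
  have hanalytic : AnalyticOnNhd ℝ (fun x ↦ y ^ s - x ^ s) (Ioo 0 y) := fun x hx ↦
    analyticAt_const.sub (analyticAt_rpow_const analyticAt_id hx.1.ne' s)
  exact hanalytic.eqOn_of_preconnected_of_eventuallyEq
    (analyticOnNhd_const.mul (analyticOnNhd_rpowOsc hs y)) isPreconnected_Ioo
    ⟨hα.trans_lt hαx₀, hx₀y⟩ (eventually_of_mem (Ioo_mem_nhds hαx₀ hx₀y) h)

theorem rpow_eq_four_mul_rpowOsc_zero (hs : 0 < s) (hy : 0 < y)
    (h : ∀ x ∈ Ioo 0 y, y ^ s - x ^ s = 4 * rpowOsc s x y) :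
    y ^ s = 4 * rpowOsc s 0 y := by
  have hleft : Tendsto (fun x ↦ y ^ s - x ^ s) (𝓝[>] 0) (𝓝 (y ^ s)) := by
    have hcont : Continuous fun x : ℝ ↦ y ^ s - x ^ s :=
      continuous_const.sub (Real.continuous_rpow_const hs.le)
    simpa only [Real.zero_rpow hs.ne', sub_zero] using hcont.continuousWithinAt (x := 0).tendsto
  have hright : Tendsto (fun x ↦ 4 * rpowOsc s x y) (𝓝[>] 0) (𝓝 (4 * rpowOsc s 0 y)) :=
    (continuousAt_const.mul (continuousAt_rpowOsc_zero hs hy)).continuousWithinAt.tendsto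
  exact tendsto_nhds_unique (hleft.congr' (eventually_of_mem (Ioo_mem_nhdsGT hy) h)) hright

lemma rpow_eq_four_mul_rpowOsc_zero_iff (hs : 0 < s) (hy : 0 < y) :
    y ^ s = 4 * rpowOsc s 0 y ↔ 8 * s = (1 + s) ^ (2 + 1 / s) := by
  rw [rpowOsc_zero hs hy]
  field_simp
  constructor <;> intro h <;> linarith

end Power

theorem x_pow_five_halves_not_solution_general {s α β : ℝ} (hs : 0 < s)
    (hne : 8 * s ≠ (1 + s) ^ (2 + 1 / s)) (hα : 0 ≤ α) (hαβ : α < β) :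
    ∃ x y, α < x ∧ x < y ∧ y < β ∧
      varD (fun t ↦ t ^ s) x y ≠ 4 * ENNReal.ofReal (oscI (fun t ↦ t ^ s) x y) := by
  by_contra! hidentity
  obtain ⟨y, hαy, hyβ⟩ := exists_between hαβ
  have hy : 0 < y := hα.trans_lt hαy
  have hlocal : ∀ x ∈ Ioo α y, y ^ s - x ^ s = 4 * rpowOsc s x y := fun x hx ↦
    (varD_rpow_eq_four_mul_oscI_iff hs (hα.trans hx.1.le) hx.2).1 (hidentity x y hx.1 hx.2 hyβ)
  have hglobal := sub_rpow_eq_four_mul_rpowOsc_of_forall_Ioo (by linarith) hα hαy hlocal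
  exact hne ((rpow_eq_four_mul_rpowOsc_zero_iff hs hy).1
    (rpow_eq_four_mul_rpowOsc_zero hs hy hglobal))

lemma eight_mul_five_halves_ne :
    8 * ((5 : ℝ) / 2) ≠ (1 + (5 : ℝ) / 2) ^ ((2 : ℝ) + 1 / ((5 : ℝ) / 2)) := by
  intro h
  have hpow : ((1 + (5 : ℝ) / 2) ^ ((2 : ℝ) + 1 / ((5 : ℝ) / 2))) ^ 5 = (7 / 2) ^ 12 := by
    rw [← Real.rpow_mul_natCast (by norm_num), ← Real.rpow_natCast]
    norm_num
  rw [← h] at hpow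
  norm_num at hpow

lemma eight_mul_one_eq : 8 * (1 : ℝ) = (1 + (1 : ℝ)) ^ ((2 : ℝ) + 1 / (1 : ℝ)) := by
  rw [show (2 : ℝ) + 1 / 1 = (3 : ℕ) by norm_num, Real.rpow_natCast]
  norm_num

/-- The function `x ↦ x^{5/2}` fails the identity `osc(f,I) = (1/4)|Df|(I)` on some
subinterval of any `(α, β)` with `0 < α < β`; equivalently, `s = 5/2` does not solve
`8s = (1+s)^{2+1/s}`, while `s = 1` does. -/
theorem x_pow_five_halves_not_solution :
    (∀ α β : ℝ, 0 < α → α < β →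
      ∃ x y, α < x ∧ x < y ∧ y < β ∧
        varD (fun t => t ^ ((5 : ℝ) / 2)) x y
          ≠ 4 * ENNReal.ofReal (oscI (fun t => t ^ ((5 : ℝ) / 2)) x y)) ∧
    (¬ (8 * ((5 : ℝ) / 2) = (1 + (5 : ℝ) / 2) ^ ((2 : ℝ) + 1 / ((5 : ℝ) / 2)))) ∧
    (8 * (1 : ℝ) = (1 + (1 : ℝ)) ^ ((2 : ℝ) + 1 / (1 : ℝ))) :=
  ⟨fun _ _ hα hαβ ↦ x_pow_five_halves_not_solution_general (by norm_num)
    eight_mul_five_halves_ne hα.le hαβ, eight_mul_five_halves_ne, eight_mul_one_eq⟩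
end
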